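/- arXiv:0902.3311 — 2 statements merged into one kernel-verified Lean document; each statement's English description precedes it below -/
import Mathlib

section
/- Let d ≥ 1, 1 ≤ p < ∞, 1 ≤ r < ∞ and s > d/r. For a sequence c define the weak scaling function s̃_c(p) = sup{ α ∈ (0,1) : c ∈ W((1−α)p, p) }. Set α̃ = 2s/(2s+d) if r > pd/(2s+d), and α̃ = 2(s − d/r + d/p)/(2(s − d/r) + d) otherwise. Then the set of c ∈ b^{s,∞}_r with s̃_c(p) ≠ α̃ is a Haar-null subset of b^{s,∞}_r. -/
open MeasureTheory
open scoped ENNReal BigOperators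

/-- The space of wavelet-type coefficient sequences `c = (c_{j,k})`, `j ∈ ℕ`,
`k ∈ {0,…,2^j−1}^d`. -/
abbrev BSeq (d : ℕ) := (j : ℕ) → (Fin d → Fin (2 ^ j)) → ℝ

/-- The `j`-th term `2^{(s−d/r+d/2)j} (Σ_k |c_{j,k}|^r)^{1/r}` of the Besov quasi-norm. -/
noncomputable def besovNormAt (d : ℕ) (s r : ℝ) (c : BSeq d) (j : ℕ) : ℝ :=
  (2 : ℝ) ^ ((s - (d : ℝ) / r + (d : ℝ) / 2) * (j : ℝ)) *
    (∑ k : Fin d → Fin (2 ^ j), |c j k| ^ r) ^ (1 / r)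

/-- Membership in the Besov sequence space `b^{s,∞}_r`:
`sup_j 2^{(s−d/r+d/2)j} (Σ_k |c_{j,k}|^r)^{1/r} < ∞`. -/
def MemBesov (d : ℕ) (s r : ℝ) (c : BSeq d) : Prop :=
  ∃ C : ℝ, ∀ j : ℕ, besovNormAt d s r c j ≤ C

/-- The weak Besov quasi-norm
`‖c‖_{W(w,p)} = sup_{λ>0} λ^w Σ_{j≥0} 2^{j(dp/2−d)} #{k : |c_{j,k}| > λ}`, valued in `[0,∞]`. -/
noncomputable def wBesovNorm (d : ℕ) (w p : ℝ) (c : BSeq d) : ℝ≥0∞ :=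
  ⨆ lam : Set.Ioi (0 : ℝ),
    ENNReal.ofReal ((lam : ℝ) ^ w) *
      ∑' j : ℕ, ENNReal.ofReal ((2 : ℝ) ^ (((d : ℝ) * p / 2 - (d : ℝ)) * (j : ℝ))) *
        (Nat.card {k : Fin d → Fin (2 ^ j) // (lam : ℝ) < |c j k|} : ℝ≥0∞)

/-- Membership in the weak Besov sequence space `W(w,p)`. -/
def MemWBesov (d : ℕ) (w p : ℝ) (c : BSeq d) : Prop :=
  wBesovNorm d w p c ≠ ⊤

/-- The Besov sequence space `b^{s,∞}_r` as a type. -/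
def BesovSp (d : ℕ) (s r : ℝ) := {c : BSeq d // MemBesov d s r c}

/-- The extended distance on sequences associated with the Besov quasi-norm. -/
noncomputable def besovEDist (d : ℕ) (s r : ℝ) (c c' : BSeq d) : ℝ≥0∞ :=
  ⨆ j : ℕ, ENNReal.ofReal (besovNormAt d s r (c - c') j)

/-- A set `S ⊆ b^{s,∞}_r` is Haar-null (relative to a topology `τ` on `b^{s,∞}_r`) if it is
contained in a Borel set `A` carrying a compactly supported Borel probability measure `μ`
all of whose translates of `A` are null. -/
def IsHaarNullBesov (d : ℕ) (s r : ℝ) (τ : TopologicalSpace (BesovSp d s r))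
    (S : Set (BesovSp d s r)) : Prop :=
  ∃ A : Set (BesovSp d s r), S ⊆ A ∧ MeasurableSet[@borel _ τ] A ∧
    ∃ μ : @Measure (BesovSp d s r) (@borel _ τ),
      @IsProbabilityMeasure _ (@borel _ τ) μ ∧
      (∃ K : Set (BesovSp d s r), @IsCompact _ τ K ∧ μ Kᶜ = 0) ∧
      ∀ x : BesovSp d s r, μ {y : BesovSp d s r | ∃ a ∈ A, y.1 = x.1 + a.1} = 0

/-- `τ` is the quasi-norm topology of `b^{s,∞}_r`: around every point, the balls of
`besovEDist` form a basis of neighbourhoods. -/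
def IsBesovTopology (d : ℕ) (s r : ℝ) (τ : TopologicalSpace (BesovSp d s r)) : Prop :=
  ∀ x : BesovSp d s r, (@nhds _ τ x).HasBasis (fun ε : ℝ≥0∞ => 0 < ε)
    (fun ε => {y : BesovSp d s r | besovEDist d s r x.1 y.1 < ε})

/-- The minimax exponent `α̃`. -/
noncomputable def alphaTilde (d : ℕ) (s r p : ℝ) : ℝ :=
  if p * (d : ℝ) / (2 * s + (d : ℝ)) < r then 2 * s / (2 * s + (d : ℝ))
  else 2 * (s - (d : ℝ) / r + (d : ℝ) / p) / (2 * (s - (d : ℝ) / r) + (d : ℝ))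

/-- The irreducibility index `J(j,k)`: the smallest `J` such that `k = 2^{j−J} K` for some
`K ∈ {0,…,2^J−1}^d`, i.e. the smallest `J` with `2^{j−J} ∣ k_i` for all `i`. -/
def irredIndex (d : ℕ) (j : ℕ) (k : Fin d → Fin (2 ^ j)) : ℕ :=
  Nat.find (p := fun J : ℕ => ∀ i : Fin d, 2 ^ (j - J) ∣ (k i : ℕ)) ⟨j, fun i => by simp⟩

/-- The saturating sequence `g`, with `g_{j,k} = j^{−(1+3/r)} 2^{−(s−d/r+d/2)j} 2^{−(d/r)J(j,k)}`
for `j ≥ 1` and `g_{0,k} = 0`. -/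
noncomputable def gSeq (d : ℕ) (s r : ℝ) : BSeq d := fun j k =>
  if j = 0 then 0
  else (j : ℝ) ^ (-(1 + 3 / r)) * (2 : ℝ) ^ (-(s - (d : ℝ) / r + (d : ℝ) / 2) * (j : ℝ)) *
    (2 : ℝ) ^ (-((d : ℝ) / r) * (irredIndex d j k : ℝ))

/-! The proof rests on one exponent. By Hölder's inequality (for `w ≤ r`) or the embedding
`ℓ^r ⊆ ℓ^w` (for `w ≥ r`), the term of scale `j` in the `W(w,p)` quasi-norm of a sequence of
`b^{s,∞}_r` is of order at most `2^{e(w)j}`, where `e` is a maximum of two affine functions of `w`,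
hence convex. It is negative at `w = p` and vanishes at `w₀ = (1 - α̃)p`, so by convexity it is
negative on `(w₀,p)` and positive below `w₀`. Hence every `c ∈ b^{s,∞}_r` lies in `W(w,p)` for
`w ∈ (w₀,p)`, which gives `s̃_c(p) ≥ α̃`. For `w < w₀`, a sequence `g ∈ b^{s,∞}_r` that is as large
as possible at every scale lies outside a Borel linear space `V_w ⊇ W(w,p)`. A line of direction `g`
then meets each translate of `V_w` in at most one point, so Lebesgue measure on a segment of that
line shows that `V_w` is Haar-null, and countably many `w` suffice. -/

/-! ### Power sums -/

lemma sum_rpow_le_rpow_sum {ι : Type*} (t : Finset ι) {f : ι → ℝ} (hf : ∀ i ∈ t, 0 ≤ f i)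
    {q : ℝ} (hq : 1 ≤ q) : ∑ i ∈ t, f i ^ q ≤ (∑ i ∈ t, f i) ^ q := by
  classical
  induction t using Finset.induction with
  | empty => simp [Real.zero_rpow (zero_lt_one.trans_le hq).ne']
  | insert i t hi ih =>
    rw [Finset.forall_mem_insert] at hf
    rw [Finset.sum_insert hi, Finset.sum_insert hi]
    exact (add_le_add_right (ih hf.2) _).trans
      (Real.add_rpow_le_rpow_add hf.1 (Finset.sum_nonneg hf.2) hq)

lemma sum_rpow_le_card_rpow_mul_rpow_sum {ι : Type*} (t : Finset ι) {f : ι → ℝ}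
    (hf : ∀ i ∈ t, 0 ≤ f i) {q : ℝ} (hq : 0 < q) (hq1 : q ≤ 1) :
    ∑ i ∈ t, f i ^ q ≤ (t.card : ℝ) ^ (1 - q) * (∑ i ∈ t, f i) ^ q := by
  have hfq : ∀ i ∈ t, 0 ≤ f i ^ q := fun i hi => Real.rpow_nonneg (hf i hi) q
  have hsum : 0 ≤ ∑ i ∈ t, f i ^ q := Finset.sum_nonneg hfq
  have hpow : (∑ i ∈ t, f i ^ q) ^ q⁻¹ ≤ (t.card : ℝ) ^ (q⁻¹ - 1) * ∑ i ∈ t, f i :=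
    calc (∑ i ∈ t, f i ^ q) ^ q⁻¹ ≤ (t.card : ℝ) ^ (q⁻¹ - 1) * ∑ i ∈ t, (f i ^ q) ^ q⁻¹ :=
          Real.rpow_sum_le_const_mul_sum_rpow_of_nonneg t ((one_le_inv₀ hq).2 hq1) hfq
      _ = (t.card : ℝ) ^ (q⁻¹ - 1) * ∑ i ∈ t, f i := by
          rw [Finset.sum_congr rfl fun i hi => Real.rpow_rpow_inv (hf i hi) hq.ne']
  calc ∑ i ∈ t, f i ^ q = ((∑ i ∈ t, f i ^ q) ^ q⁻¹) ^ q := (Real.rpow_inv_rpow hsum hq.ne').symm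
    _ ≤ ((t.card : ℝ) ^ (q⁻¹ - 1) * ∑ i ∈ t, f i) ^ q :=
        Real.rpow_le_rpow (Real.rpow_nonneg hsum _) hpow hq.le
    _ = (t.card : ℝ) ^ (1 - q) * (∑ i ∈ t, f i) ^ q := by
        rw [Real.mul_rpow (by positivity) (Finset.sum_nonneg hf),
          ← Real.rpow_mul (Nat.cast_nonneg _), sub_mul, inv_mul_cancel₀ hq.ne', one_mul]

lemma card_scale (d j : ℕ) :
    (Fintype.card (Fin d → Fin (2 ^ j)) : ℝ) = (2 : ℝ) ^ ((d : ℝ) * (j : ℝ)) := by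
  rw [mul_comm, Real.rpow_mul two_pos.le, Real.rpow_natCast, Real.rpow_natCast]
  simp

/-! ### The growth exponent and its zero -/

/-- The exponent `e(w)` such that `2^{e(w)j}` is the order of the largest possible value of
`2^{j(dp/2−d)} Σ_k |c_{j,k}|^w` over the unit ball of `b^{s,∞}_r`. The first term is attained when
all coefficients of the scale are equal and dominates for `w ≤ r`; the second one is attained when
a single coefficient is nonzero and dominates for `w ≥ r`. -/
noncomputable def growthExponent (d : ℕ) (s r p w : ℝ) : ℝ :=
  max ((d : ℝ) * p / 2 - w * (s + (d : ℝ) / 2))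
    ((d : ℝ) * p / 2 - d - w * (s - (d : ℝ) / r + (d : ℝ) / 2))

section GrowthExponent

variable {d : ℕ} {s r p w w₀ : ℝ}

lemma growthExponent_self_neg (hp : 0 < p) (hs : 0 < s) (hsob : (d : ℝ) / r - d / p < s) :
    growthExponent d s r p p < 0 := by
  have hdp : (d : ℝ) / p * p = d := div_mul_cancel₀ _ hp.ne'
  have hpos : 0 < (s - (d : ℝ) / r + d / p) * p := mul_pos (by linarith) hp
  exact max_lt (by linarith [mul_pos hs hp]) (by linarith)

lemma convexOn_growthExponent : ConvexOn ℝ Set.univ (growthExponent d s r p) := by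
  have affine : ∀ m b : ℝ, ConvexOn ℝ Set.univ fun w => m - w * b := fun m b =>
    ⟨convex_univ, fun x _ y _ u v _ _ huv => le_of_eq <| by
      simp only [smul_eq_mul]
      linear_combination -m * huv⟩
  exact (affine _ _).sup (affine _ _)

lemma growthExponent_pos_of_lt_zero (h₀ : growthExponent d s r p w₀ = 0)
    (hp : growthExponent d s r p p < 0) (hw₀ : w₀ < p) (hw : w < w₀) :
    0 < growthExponent d s r p w := by
  have hseg : w₀ ∈ openSegment ℝ w p := openSegment_eq_Ioo (hw.trans hw₀) ▸ ⟨hw, hw₀⟩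
  simpa only [h₀] using convexOn_growthExponent.lt_left_of_right_lt (Set.mem_univ _)
    (Set.mem_univ _) hseg (hp.trans_eq h₀.symm)

lemma growthExponent_neg_of_zero_lt (h₀ : growthExponent d s r p w₀ = 0)
    (hp : growthExponent d s r p p < 0) (hw : w₀ < w) (hwp : w < p) :
    growthExponent d s r p w < 0 := by
  have hseg : w ∈ openSegment ℝ w₀ p := openSegment_eq_Ioo (hw.trans hwp) ▸ ⟨hw, hwp⟩
  by_contra! h
  exact (h.trans_lt (convexOn_growthExponent.lt_left_of_right_lt (Set.mem_univ _)
    (Set.mem_univ _) hseg (hp.trans_le h))).ne' h₀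

lemma growthExponent_of_le (hr : 0 < r) (hw : w ≤ r) :
    growthExponent d s r p w = (d : ℝ) * p / 2 - w * (s + (d : ℝ) / 2) := by
  have hle : (d : ℝ) * (w / r) ≤ d := mul_le_of_le_one_right (by positivity) ((div_le_one hr).2 hw)
  exact max_eq_left (by linarith [mul_div_left_comm w (d : ℝ) r])

lemma growthExponent_of_ge (hr : 0 < r) (hw : r ≤ w) :
    growthExponent d s r p w = (d : ℝ) * p / 2 - d - w * (s - (d : ℝ) / r + (d : ℝ) / 2) := by
  have hle : (d : ℝ) ≤ d * (w / r) := le_mul_of_one_le_right (by positivity) ((one_le_div hr).2 hw)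
  exact max_eq_right (by linarith [mul_div_left_comm w (d : ℝ) r])

/-- The critical exponent `(1 - α̃)p` is at least `r` only if `2 < p`: this is where the Sobolev
condition `d/r - d/p < s` enters. -/
lemma two_lt_of_le_div (hp : 0 < p) (hr : 0 < r) (hs : 0 < s)
    (hsob : (d : ℝ) / r - d / p < s) (hsparse : r ≤ p * d / (2 * s + d)) : 2 < p := by
  have hle : r * (2 * s + d) ≤ p * d := (le_div_iff₀ (by positivity)).1 hsparse
  have hrp : r ≤ p := by
    by_contra! hpr
    nlinarith [mul_pos hr hs, mul_nonneg (sub_pos.2 hpr).le d.cast_nonneg]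
  have hdiv : (d : ℝ) / p ≤ d / r := div_le_div_of_nonneg_left d.cast_nonneg hr hrp
  have hle' : 2 * s + d ≤ p * (d / r) := by rwa [← mul_div_assoc, le_div_iff₀ hr, mul_comm]
  have hdp : p * (d / p) = (d : ℝ) := mul_div_cancel₀ _ hp.ne'
  by_contra! hp2
  linarith [mul_nonneg (sub_nonneg.2 hp2) (sub_nonneg.2 hdiv)]

lemma sparse_slope_pos (hd : 1 ≤ d) (hp : 2 < p) (hsob : (d : ℝ) / r - d / p < s) :
    0 < 2 * (s - (d : ℝ) / r) + d := by
  have hd0 : (0 : ℝ) < d := by exact_mod_cast hd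
  have hlt : (d : ℝ) / p < d / 2 := div_lt_div_of_pos_left hd0 two_pos hp
  linarith

lemma alphaTilde_mem_Ioo (hd : 1 ≤ d) (hp : 0 < p) (hr : 0 < r) (hs : 0 < s)
    (hsob : (d : ℝ) / r - d / p < s) : alphaTilde d s r p ∈ Set.Ioo 0 1 := by
  have hd0 : (0 : ℝ) < d := by exact_mod_cast hd
  unfold alphaTilde
  split_ifs with hcase
  · exact ⟨by positivity, (div_lt_one (by positivity)).2 (by linarith)⟩
  · have hp2 := two_lt_of_le_div hp hr hs hsob (not_lt.1 hcase)
    have hslope := sparse_slope_pos hd hp2 hsob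
    have hlt : (d : ℝ) / p < d / 2 := div_lt_div_of_pos_left hd0 two_pos hp2
    exact ⟨div_pos (by linarith) hslope, (div_lt_one hslope).2 (by linarith)⟩

lemma growthExponent_alphaTilde (hd : 1 ≤ d) (hp : 0 < p) (hr : 0 < r) (hs : 0 < s)
    (hsob : (d : ℝ) / r - d / p < s) :
    growthExponent d s r p ((1 - alphaTilde d s r p) * p) = 0 := by
  unfold alphaTilde
  split_ifs with hcase
  · have hcrit : (1 - 2 * s / (2 * s + d)) * p = p * d / (2 * s + d) := by field_simp; ring
    rw [hcrit, growthExponent_of_le hr hcase.le]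
    field_simp
    ring
  · rw [not_lt] at hcase
    have hslope := sparse_slope_pos hd (two_lt_of_le_div hp hr hs hsob hcase) hsob
    set σ := s - (d : ℝ) / r with hσ
    have hcrit : (1 - 2 * (σ + d / p) / (2 * σ + d)) * p = d * (p - 2) / (2 * σ + d) := by
      field_simp
      ring
    have hle : r ≤ d * (p - 2) / (2 * σ + d) := by
      have hrσ : r * σ = r * s - d := by rw [hσ, mul_sub, mul_div_cancel₀ _ hr.ne']
      rw [le_div_iff₀ (by positivity)] at hcase ⊢
      linarith
    rw [hcrit, growthExponent_of_ge hr hle, ← hσ]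
    field_simp
    ring

end GrowthExponent

/-! ### Besov sequences lie in `W(w,p)` when the growth exponent is negative -/

section WeakBesov

variable {d : ℕ} {s r p w : ℝ} {c : BSeq d}

/-- The number of coefficients of scale `j` exceeding the threshold `l` in absolute value. -/
noncomputable def tailCount (c : BSeq d) (l : ℝ) (j : ℕ) : ℕ :=
  {k : Fin d → Fin (2 ^ j) | l < |c j k|}.ncard

/-- The contribution `l^w 2^{j(dp/2−d)} #{k : |c_{j,k}| > l}` of the scale `j` and the threshold `l`
to the quasi-norm of `W(w,p)`. -/
noncomputable def levelMass (w p : ℝ) (c : BSeq d) (l : ℝ) (j : ℕ) : ℝ :=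
  l ^ w * (2 : ℝ) ^ (((d : ℝ) * p / 2 - d) * j) * tailCount c l j

lemma wBesovNorm_eq_iSup_tsum_levelMass :
    wBesovNorm d w p c = ⨆ l : Set.Ioi (0 : ℝ), ∑' j, ENNReal.ofReal (levelMass w p c l j) := by
  refine iSup_congr fun ⟨l, (hl : 0 < l)⟩ => ?_
  rw [← ENNReal.tsum_mul_left]
  refine tsum_congr fun j => ?_
  rw [levelMass, mul_assoc, ENNReal.ofReal_mul (by positivity), ENNReal.ofReal_mul (by positivity),
    ENNReal.ofReal_natCast]
  rfl

lemma rpow_mul_tailCount_le_sum {l : ℝ} (hl : 0 ≤ l) (hw : 0 ≤ w) (j : ℕ) :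
    l ^ w * tailCount c l j ≤ ∑ k, |c j k| ^ w := by
  classical
  rw [tailCount, Set.ncard_eq_toFinset_card', Set.toFinset_ofPred, mul_comm, ← nsmul_eq_mul]
  refine (Finset.card_nsmul_le_sum _ (fun k => |c j k| ^ w) _ fun k hk => ?_).trans
    (Finset.sum_le_univ_sum_of_nonneg fun k => by positivity)
  exact Real.rpow_le_rpow hl (Finset.mem_filter.1 hk).2.le hw

lemma wBesovNorm_le_tsum_sum_rpow (hw : 0 ≤ w) :
    wBesovNorm d w p c ≤
      ∑' j : ℕ, ENNReal.ofReal ((2 : ℝ) ^ (((d : ℝ) * p / 2 - d) * j) * ∑ k, |c j k| ^ w) := by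
  rw [wBesovNorm_eq_iSup_tsum_levelMass]
  refine iSup_le fun ⟨l, (hl : 0 < l)⟩ => ENNReal.tsum_le_tsum fun j => ?_
  refine ENNReal.ofReal_le_ofReal ?_
  rw [levelMass, mul_comm (l ^ w), mul_assoc]
  gcongr
  exact rpow_mul_tailCount_le_sum hl.le hw j

lemma summable_two_rpow_mul {e : ℝ} (he : e < 0) : Summable fun j : ℕ => (2 : ℝ) ^ (e * j) := by
  simp only [Real.rpow_mul two_pos.le, Real.rpow_natCast]
  exact summable_geometric_of_lt_one (by positivity)
    (Real.rpow_lt_one_of_one_lt_of_neg one_lt_two he)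

lemma MemBesov.exists_rpow_sum_le (hc : MemBesov d s r c) :
    ∃ C : ℝ, 0 ≤ C ∧ ∀ j : ℕ, (∑ k, |c j k| ^ r) ^ (1 / r) ≤
      C * (2 : ℝ) ^ (-(s - (d : ℝ) / r + (d : ℝ) / 2) * j) := by
  obtain ⟨C, hC⟩ := hc
  refine ⟨C, le_trans (by unfold besovNormAt; positivity) (hC 0), fun j => ?_⟩
  rw [neg_mul, Real.rpow_neg two_pos.le, ← div_eq_mul_inv, le_div_iff₀' (by positivity)]
  exact hC j

lemma sum_abs_rpow_le_growthExponent (hr : 0 < r) (hw : 0 < w) {C : ℝ} (hC : 0 ≤ C) {j : ℕ}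
    (h : (∑ k, |c j k| ^ r) ^ (1 / r) ≤
      C * (2 : ℝ) ^ (-(s - (d : ℝ) / r + (d : ℝ) / 2) * j)) :
    (2 : ℝ) ^ (((d : ℝ) * p / 2 - d) * j) * ∑ k, |c j k| ^ w ≤
      C ^ w * (2 : ℝ) ^ (growthExponent d s r p w * j) := by
  have hnonneg : ∀ k ∈ Finset.univ, 0 ≤ |c j k| ^ r := fun k _ => by positivity
  have hpow : ∑ k, |c j k| ^ w = ∑ k, (|c j k| ^ r) ^ (w / r) :=
    Finset.sum_congr rfl fun k _ => by
      rw [← Real.rpow_mul (abs_nonneg _), mul_div_cancel₀ _ hr.ne']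
  have hS : (∑ k, |c j k| ^ r) ^ (w / r) ≤
      C ^ w * (2 : ℝ) ^ (-(s - (d : ℝ) / r + (d : ℝ) / 2) * j * w) := by
    rw [Real.rpow_mul two_pos.le, ← Real.mul_rpow hC (by positivity), ← one_div_mul_eq_div r w,
      Real.rpow_mul (Finset.sum_nonneg hnonneg)]
    exact Real.rpow_le_rpow (by positivity) h hw.le
  rw [hpow]
  rcases le_total w r with hwr | hrw
  · have hHolder := sum_rpow_le_card_rpow_mul_rpow_sum Finset.univ hnonneg (div_pos hw hr)
      ((div_le_one hr).2 hwr)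
    rw [Finset.card_univ, card_scale, ← Real.rpow_mul two_pos.le] at hHolder
    calc (2 : ℝ) ^ (((d : ℝ) * p / 2 - d) * j) * ∑ k, (|c j k| ^ r) ^ (w / r)
        ≤ 2 ^ (((d : ℝ) * p / 2 - d) * j) * (2 ^ ((d : ℝ) * j * (1 - w / r)) *
            (C ^ w * 2 ^ (-(s - (d : ℝ) / r + (d : ℝ) / 2) * j * w))) := by
          gcongr
          exact hHolder.trans (by gcongr)
      _ = C ^ w * 2 ^ (((d : ℝ) * p / 2 - d) * j + d * j * (1 - w / r) +
            -(s - (d : ℝ) / r + (d : ℝ) / 2) * j * w) := by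
          rw [Real.rpow_add two_pos, Real.rpow_add two_pos]
          ring
      _ = C ^ w * 2 ^ (growthExponent d s r p w * j) := by
          rw [growthExponent_of_le hr hwr]
          congr 2
          field_simp
          ring
  · have hembed := sum_rpow_le_rpow_sum Finset.univ hnonneg ((one_le_div hr).2 hrw)
    calc (2 : ℝ) ^ (((d : ℝ) * p / 2 - d) * j) * ∑ k, (|c j k| ^ r) ^ (w / r)
        ≤ 2 ^ (((d : ℝ) * p / 2 - d) * j) *
            (C ^ w * 2 ^ (-(s - (d : ℝ) / r + (d : ℝ) / 2) * j * w)) := by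
          gcongr
          exact hembed.trans hS
      _ = C ^ w * 2 ^ (growthExponent d s r p w * j) := by
          rw [growthExponent_of_ge hr hrw, mul_left_comm, ← Real.rpow_add two_pos]
          congr 2
          ring

lemma MemBesov.memWBesov (hc : MemBesov d s r c) (hr : 0 < r) (hw : 0 < w)
    (hgrowth : growthExponent d s r p w < 0) : MemWBesov d w p c := by
  obtain ⟨C, hC, hnorm⟩ := hc.exists_rpow_sum_le
  have hsummable := (summable_two_rpow_mul hgrowth).mul_left (C ^ w)
  refine ne_top_of_le_ne_top hsummable.tsum_ofReal_ne_top ?_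
  exact (wBesovNorm_le_tsum_sum_rpow hw.le).trans <| ENNReal.tsum_le_tsum fun j =>
    ENNReal.ofReal_le_ofReal (sum_abs_rpow_le_growthExponent hr hw hC (hnorm j))

end WeakBesov

/-! ### A Borel linear space containing `W(w,p)` -/

section ScaleBounded

variable {d : ℕ} {p w : ℝ} {c : BSeq d}

lemma tailCount_add_le (a b : BSeq d) (l : ℝ) (j : ℕ) :
    tailCount (a + b) l j ≤ tailCount a (l / 2) j + tailCount b (l / 2) j := by
  refine (Set.ncard_le_ncard fun k (hk : l < |a j k + b j k|) => ?_).trans (Set.ncard_union_le _ _)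
  by_contra! hsmall
  simp only [Set.mem_union, Set.mem_ofPred_eq, not_or, not_lt] at hsmall
  linarith [abs_add_le (a j k) (b j k)]

lemma tailCount_smul_le {t m : ℝ} (hm : 0 < m) (htm : |t| ≤ m) (a : BSeq d) (l : ℝ) (j : ℕ) :
    tailCount (t • a) l j ≤ tailCount a (l / m) j := by
  refine Set.ncard_le_ncard fun k (hk : l < |t * a j k|) => (div_lt_iff₀' hm).2 (hk.trans_le ?_)
  rw [abs_mul]
  gcongr

lemma levelMass_add_le {l : ℝ} (hl : 0 ≤ l) (a b : BSeq d) (j : ℕ) :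
    levelMass w p (a + b) l j ≤
      2 ^ w * (levelMass w p a (l / 2) j + levelMass w p b (l / 2) j) := by
  have hcount : (tailCount (a + b) l j : ℝ) ≤ tailCount a (l / 2) j + tailCount b (l / 2) j := by
    exact_mod_cast tailCount_add_le a b l j
  have hl2 : l ^ w = 2 ^ w * (l / 2) ^ w := by
    rw [← Real.mul_rpow two_pos.le (by positivity), mul_div_cancel₀ _ two_ne_zero]
  unfold levelMass
  rw [hl2, ← mul_add, mul_assoc, mul_assoc, ← mul_assoc ((l / 2) ^ w)]
  gcongr

lemma levelMass_smul_le {t m l : ℝ} (hm : 0 < m) (htm : |t| ≤ m) (hl : 0 ≤ l) (a : BSeq d)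
    (j : ℕ) : levelMass w p (t • a) l j ≤ m ^ w * levelMass w p a (l / m) j := by
  have hlm : l ^ w = m ^ w * (l / m) ^ w := by
    rw [← Real.mul_rpow hm.le (by positivity), mul_div_cancel₀ _ hm.ne']
  unfold levelMass
  rw [hlm, mul_assoc, mul_assoc, ← mul_assoc ((l / m) ^ w)]
  gcongr
  exact tailCount_smul_le hm htm a l j

/-- The sequences for which the contributions to the quasi-norm of `W(w,p)` are bounded one scale
at a time (no sum over `j`) and at the dyadic thresholds `2^{-i}` only. Unlike `W(w,p)`, this space
is visibly Borel, and it increases with `w` because all its thresholds are at most one. -/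
noncomputable def scaleBounded (d : ℕ) (w p : ℝ) : Submodule ℝ (BSeq d) where
  carrier := {c | ∃ N : ℕ, ∀ i j : ℕ, levelMass w p c (2⁻¹ ^ i) j ≤ N}
  zero_mem' := ⟨0, fun i j => by
    have hcount : tailCount (0 : BSeq d) (2⁻¹ ^ i) j = 0 := by
      simp [tailCount, (pow_pos _ i).not_gt]
    rw [levelMass, hcount]
    simp⟩
  add_mem' {a b} := by
    rintro ⟨N, hN⟩ ⟨M, hM⟩
    obtain ⟨L, hL⟩ := exists_nat_ge ((2 : ℝ) ^ w * (N + M))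
    refine ⟨L, fun i j => (levelMass_add_le (by positivity) a b j).trans (le_trans ?_ hL)⟩
    rw [div_eq_mul_inv, ← pow_succ]
    gcongr
    exacts [hN (i + 1) j, hM (i + 1) j]
  smul_mem' t a := by
    rintro ⟨N, hN⟩
    obtain ⟨q, hq⟩ := pow_unbounded_of_one_lt |t| (one_lt_two : (1 : ℝ) < 2)
    obtain ⟨L, hL⟩ := exists_nat_ge (((2 : ℝ) ^ q) ^ w * N)
    refine ⟨L, fun i j => (levelMass_smul_le (by positivity) hq.le (by positivity) a j).trans
      (le_trans ?_ hL)⟩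
    rw [div_eq_mul_inv, ← inv_pow, ← pow_add]
    gcongr
    exact hN (i + q) j

lemma mem_scaleBounded :
    c ∈ scaleBounded d w p ↔ ∃ N : ℕ, ∀ i j : ℕ, levelMass w p c (2⁻¹ ^ i) j ≤ N :=
  Iff.rfl

lemma MemWBesov.mem_scaleBounded (hc : MemWBesov d w p c) : c ∈ scaleBounded d w p := by
  obtain ⟨N, hN⟩ := exists_nat_ge (wBesovNorm d w p c).toReal
  refine ⟨N, fun i j => le_trans ?_ hN⟩
  rw [← ENNReal.ofReal_le_iff_le_toReal hc, wBesovNorm_eq_iSup_tsum_levelMass]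
  exact (ENNReal.le_tsum j).trans
    (le_iSup (fun l : Set.Ioi (0 : ℝ) => ∑' j, ENNReal.ofReal (levelMass w p c l j))
      ⟨2⁻¹ ^ i, by simp⟩)

lemma scaleBounded_mono {w' : ℝ} (hw : w ≤ w') : scaleBounded d w p ≤ scaleBounded d w' p := by
  rintro c ⟨N, hN⟩
  refine ⟨N, fun i j => le_trans ?_ (hN i j)⟩
  have hle : ((2⁻¹ : ℝ) ^ i) ^ w' ≤ (2⁻¹ ^ i) ^ w :=
    Real.rpow_le_rpow_of_exponent_ge (by positivity)
      (pow_le_one₀ (by norm_num) (by norm_num)) hw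
  unfold levelMass
  gcongr

lemma measurable_tailCount (l : ℝ) (j : ℕ) : Measurable fun c : BSeq d => tailCount c l j := by
  refine (Measurable.of_discrete (f := Set.ncard)).comp (measurable_set_iff.2 fun k => ?_)
  have : Measurable fun c : BSeq d => c j k := by fun_prop
  exact (measurableSet_lt measurable_const this.abs).mem

lemma measurableSet_scaleBounded (d : ℕ) (w p : ℝ) :
    MeasurableSet (scaleBounded d w p : Set (BSeq d)) := by
  have hmass : ∀ i j : ℕ, Measurable fun c : BSeq d => levelMass w p c (2⁻¹ ^ i) j := fun i j =>
    (measurable_from_top.comp (measurable_tailCount _ j)).const_mul _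
  have hUnion : (scaleBounded d w p : Set (BSeq d)) =
      ⋃ N : ℕ, ⋂ i : ℕ, ⋂ j : ℕ, {c | levelMass w p c (2⁻¹ ^ i) j ≤ N} := by
    ext c
    simp [mem_scaleBounded]
  rw [hUnion]
  exact .iUnion fun N => .iInter fun i => .iInter fun j =>
    measurableSet_le (hmass i j) measurable_const

lemma notMem_scaleBounded_of_le_tailCount {β η : ℝ} (hβ : 0 ≤ β)
    (hcount : ∀ (j : ℕ) (l : ℝ), l < 2 ^ (-(β * j)) → 2 ^ (η * j) ≤ (tailCount c l j : ℝ))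
    (hgrowth : 0 < (d : ℝ) * p / 2 - d + η - w * β) : c ∉ scaleBounded d w p := by
  rintro ⟨N, hN⟩
  obtain ⟨j, hj⟩ := pow_unbounded_of_one_lt (N * (2 : ℝ) ^ |w|)
    (Real.one_lt_rpow one_lt_two hgrowth)
  rw [← Real.rpow_natCast, ← Real.rpow_mul two_pos.le] at hj
  -- The dyadic threshold just below the coefficients of size `2^{-βj}`.
  set i := ⌊β * j⌋₊ + 1 with hi
  have hlower : β * j < i := by
    rw [hi, Nat.cast_succ]
    exact Nat.lt_floor_add_one _
  have hupper : (i : ℝ) ≤ β * j + 1 := by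
    rw [hi, Nat.cast_succ]
    gcongr
    exact Nat.floor_le (by positivity)
  have hthreshold : (2⁻¹ : ℝ) ^ i = 2 ^ (-(i : ℝ)) := by
    rw [inv_pow, Real.rpow_neg two_pos.le, Real.rpow_natCast]
  have hiw : (i - β * j) * w ≤ |w| :=
    calc (i - β * j) * w ≤ (i - β * j) * |w| :=
        mul_le_mul_of_nonneg_left (le_abs_self w) (by linarith)
      _ ≤ |w| := mul_le_of_le_one_left (abs_nonneg w) (by linarith)
  have hlt : (2⁻¹ : ℝ) ^ i < 2 ^ (-(β * j)) := by
    rw [hthreshold]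
    exact Real.rpow_lt_rpow_of_exponent_lt one_lt_two (neg_lt_neg hlower)
  refine hj.not_ge ?_
  calc (2 : ℝ) ^ (((d : ℝ) * p / 2 - d + η - w * β) * j)
      ≤ 2 ^ (-(i : ℝ) * w + ((d : ℝ) * p / 2 - d) * j + η * j + |w|) :=
        Real.rpow_le_rpow_of_exponent_le one_le_two (by linarith)
    _ = (2⁻¹ ^ i) ^ w * 2 ^ (((d : ℝ) * p / 2 - d) * j) * 2 ^ (η * j) * 2 ^ |w| := by
        rw [hthreshold, ← Real.rpow_mul two_pos.le, ← Real.rpow_add two_pos,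
          ← Real.rpow_add two_pos, ← Real.rpow_add two_pos]
    _ ≤ levelMass w p c (2⁻¹ ^ i) j * 2 ^ |w| := by
        unfold levelMass
        gcongr
        exact hcount j _ hlt
    _ ≤ N * 2 ^ |w| := by gcongr; exact hN i j

end ScaleBounded

/-! ### The saturating sequence -/

section SaturatingSeq

variable {d : ℕ} {s r p w : ℝ}

/-- An element of `b^{s,∞}_r` as large as possible at every scale `j`, both by the number of its
coefficients (all of them have size at least `2^{-(s+d/2)j}`) and by the size of a single one (the
one at `k = 0` has size `2^{-(s-d/r+d/2)j}`). Either property gives one of the two terms of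
`growthExponent`. -/
noncomputable def saturatingSeq (d : ℕ) (s r : ℝ) : BSeq d := fun j k =>
  if k = 0 then (2 : ℝ) ^ (-((s - (d : ℝ) / r + (d : ℝ) / 2) * j))
  else (2 : ℝ) ^ (-((s + (d : ℝ) / 2) * j))

lemma rpow_le_abs_saturatingSeq (hr : 0 < r) (j : ℕ) (k : Fin d → Fin (2 ^ j)) :
    (2 : ℝ) ^ (-((s + (d : ℝ) / 2) * j)) ≤ |saturatingSeq d s r j k| := by
  have hdr : 0 ≤ (d : ℝ) / r := by positivity
  refine le_trans ?_ (le_abs_self _)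
  unfold saturatingSeq
  split_ifs
  · exact Real.rpow_le_rpow_of_exponent_le one_le_two (by gcongr; linarith)
  · exact le_rfl

lemma sum_abs_saturatingSeq_rpow_le (hr : 0 < r) (j : ℕ) :
    ∑ k, |saturatingSeq d s r j k| ^ r ≤
      2 * ((2 : ℝ) ^ (-((s - (d : ℝ) / r + (d : ℝ) / 2) * j))) ^ r := by
  set A : ℝ := (2 : ℝ) ^ (-((s - (d : ℝ) / r + (d : ℝ) / 2) * j)) with hA
  set B : ℝ := (2 : ℝ) ^ (-((s + (d : ℝ) / 2) * j)) with hB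
  have hterm : ∀ k, |saturatingSeq d s r j k| ^ r ≤ (if k = 0 then A ^ r else 0) + B ^ r := by
    intro k
    unfold saturatingSeq
    split_ifs
    · rw [abs_of_nonneg (by positivity)]
      exact le_add_of_nonneg_right (by positivity)
    · rw [abs_of_nonneg (by positivity), zero_add]
  have hcardB : (2 : ℝ) ^ ((d : ℝ) * j) * B ^ r = A ^ r := by
    rw [hA, hB, ← Real.rpow_mul two_pos.le, ← Real.rpow_mul two_pos.le, ← Real.rpow_add two_pos]
    congr 1
    field_simp
    ring
  calc ∑ k, |saturatingSeq d s r j k| ^ r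
      ≤ ∑ k : Fin d → Fin (2 ^ j), ((if k = 0 then A ^ r else 0) + B ^ r) :=
        Finset.sum_le_sum fun k _ => hterm k
    _ = A ^ r + 2 ^ ((d : ℝ) * j) * B ^ r := by
        rw [Finset.sum_add_distrib, Finset.sum_ite_eq' Finset.univ 0, if_pos (Finset.mem_univ _),
          Finset.sum_const, nsmul_eq_mul, Finset.card_univ, card_scale]
    _ = 2 * A ^ r := by rw [hcardB, two_mul]

lemma memBesov_saturatingSeq (hr : 0 < r) : MemBesov d s r (saturatingSeq d s r) := by
  refine ⟨2 ^ (1 / r), fun j => ?_⟩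
  set θ := s - (d : ℝ) / r + (d : ℝ) / 2
  calc besovNormAt d s r (saturatingSeq d s r) j
      ≤ 2 ^ (θ * j) * (2 * ((2 : ℝ) ^ (-(θ * j))) ^ r) ^ (1 / r) := by
        unfold besovNormAt
        gcongr
        exact sum_abs_saturatingSeq_rpow_le hr j
    _ = 2 ^ (1 / r) := by
        rw [Real.mul_rpow two_pos.le (by positivity), one_div,
          Real.rpow_rpow_inv (by positivity) hr.ne', mul_left_comm, ← Real.rpow_add two_pos,
          add_neg_cancel, Real.rpow_zero, mul_one]

lemma tailCount_saturatingSeq_of_lt (hr : 0 < r) {j : ℕ} {l : ℝ}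
    (hl : l < 2 ^ (-((s + (d : ℝ) / 2) * j))) :
    (tailCount (saturatingSeq d s r) l j : ℝ) = 2 ^ ((d : ℝ) * j) := by
  have huniv : {k | l < |saturatingSeq d s r j k|} = Set.univ :=
    Set.eq_univ_of_forall fun k => hl.trans_le (rpow_le_abs_saturatingSeq hr j k)
  rw [tailCount, huniv, Set.ncard_univ, Nat.card_eq_fintype_card, card_scale]

lemma one_le_tailCount_saturatingSeq {j : ℕ} {l : ℝ}
    (hl : l < 2 ^ (-((s - (d : ℝ) / r + (d : ℝ) / 2) * j))) :
    1 ≤ tailCount (saturatingSeq d s r) l j := by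
  refine (Set.ncard_pos).2 ⟨0, hl.trans_le ?_⟩
  rw [saturatingSeq, if_pos rfl]
  exact le_abs_self _

lemma saturatingSeq_notMem_scaleBounded (hr : 0 < r) (hp : growthExponent d s r p p < 0)
    (hwp : w < p) (hw : 0 < growthExponent d s r p w) :
    saturatingSeq d s r ∉ scaleBounded d w p := by
  obtain ⟨hdense, hsparse⟩ := max_lt_iff.1 hp
  -- Both affine terms of the growth exponent are negative at `p`, so the one which is positive
  -- at `w < p` has negative slope.
  rcases lt_max_iff.1 hw with h | h
  · have hβ : 0 ≤ s + (d : ℝ) / 2 := by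
      by_contra! hneg
      linarith [mul_pos_of_neg_of_neg (sub_neg.2 hwp) hneg]
    exact notMem_scaleBounded_of_le_tailCount hβ
      (fun j l hl => (tailCount_saturatingSeq_of_lt hr hl).ge) (by linarith)
  · have hβ : 0 ≤ s - (d : ℝ) / r + (d : ℝ) / 2 := by
      by_contra! hneg
      linarith [mul_pos_of_neg_of_neg (sub_neg.2 hwp) hneg]
    refine notMem_scaleBounded_of_le_tailCount (η := 0) hβ (fun j l hl => ?_) (by linarith)
    rw [zero_mul, Real.rpow_zero]
    exact_mod_cast one_le_tailCount_saturatingSeq hl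

end SaturatingSeq

/-! ### Lines as probes for Haar-null sets -/

section HaarNull

variable {d : ℕ} {s r : ℝ} {τ : TopologicalSpace (BesovSp d s r)} {g : BSeq d}

lemma two_rpow_mul_abs_le_besovNormAt (hr : 0 < r) (c : BSeq d) (j : ℕ) (k : Fin d → Fin (2 ^ j)) :
    (2 : ℝ) ^ ((s - (d : ℝ) / r + (d : ℝ) / 2) * j) * |c j k| ≤ besovNormAt d s r c j := by
  unfold besovNormAt
  gcongr
  rw [one_div, Real.le_rpow_inv_iff_of_pos (abs_nonneg _) (by positivity) hr]
  exact Finset.single_le_sum (f := fun k => |c j k| ^ r) (fun k _ => by positivity)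
    (Finset.mem_univ k)

lemma IsBesovTopology.continuous_val (hτ : IsBesovTopology d s r τ) (hr : 0 < r) :
    Continuous fun c : BesovSp d s r => c.1 := by
  refine continuous_pi fun j => continuous_pi fun k => continuous_iff_continuousAt.2 fun x => ?_
  set A : ℝ := (2 : ℝ) ^ ((s - (d : ℝ) / r + (d : ℝ) / 2) * j)
  have hA : 0 < A := by positivity
  refine ((hτ x).tendsto_iff Metric.nhds_basis_ball).2 fun ε hε =>
    ⟨ENNReal.ofReal (A * ε), ENNReal.ofReal_pos.2 (by positivity), fun y hy => ?_⟩
  have hnorm : besovNormAt d s r (x.1 - y.1) j < A * ε :=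
    (ENNReal.ofReal_lt_ofReal_iff (by positivity)).1 <|
      (le_iSup (fun j => ENNReal.ofReal (besovNormAt d s r (x.1 - y.1) j)) j).trans_lt hy
  rw [Metric.mem_ball, dist_comm, Real.dist_eq]
  exact lt_of_mul_lt_mul_left ((two_rpow_mul_abs_le_besovNormAt hr _ j k).trans_lt hnorm) hA.le

lemma besovNormAt_smul (hr : 0 < r) (t : ℝ) (g : BSeq d) (j : ℕ) :
    besovNormAt d s r (t • g) j = |t| * besovNormAt d s r g j := by
  have hsum : ∑ k, |(t • g) j k| ^ r = |t| ^ r * ∑ k, |g j k| ^ r := by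
    rw [Finset.mul_sum]
    refine Finset.sum_congr rfl fun k _ => ?_
    rw [← Real.mul_rpow (abs_nonneg _) (abs_nonneg _), ← abs_mul]
    rfl
  rw [besovNormAt, hsum, Real.mul_rpow (by positivity) (by positivity), one_div,
    Real.rpow_rpow_inv (abs_nonneg _) hr.ne', mul_left_comm, besovNormAt, one_div]

lemma MemBesov.smul (hg : MemBesov d s r g) (hr : 0 < r) (t : ℝ) : MemBesov d s r (t • g) := by
  obtain ⟨C, hC⟩ := hg
  refine ⟨|t| * C, fun j => ?_⟩
  rw [besovNormAt_smul hr]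
  exact mul_le_mul_of_nonneg_left (hC j) (abs_nonneg _)

/-- The line `t ↦ t g` in `b^{s,∞}_r`, whose segment `0 ≤ t ≤ 1` carries the probe measures. -/
def besovLine (hg : MemBesov d s r g) (hr : 0 < r) (t : ℝ) : BesovSp d s r :=
  ⟨t • g, hg.smul hr t⟩

lemma continuous_besovLine (hτ : IsBesovTopology d s r τ) (hg : MemBesov d s r g) (hr : 0 < r) :
    Continuous (besovLine hg hr) := by
  obtain ⟨C, hC⟩ := id hg
  have hdist : ∀ t u, besovEDist d s r (besovLine hg hr t).1 (besovLine hg hr u).1 ≤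
      ENNReal.ofReal (|t - u| * C) := fun t u => iSup_le fun j => by
    rw [besovLine, besovLine, ← sub_smul, besovNormAt_smul hr]
    exact ENNReal.ofReal_le_ofReal (mul_le_mul_of_nonneg_left (hC j) (abs_nonneg _))
  refine continuous_iff_continuousAt.2 fun t => (hτ _).tendsto_right_iff.2 fun ε hε => ?_
  have hlim : Filter.Tendsto (fun u => ENNReal.ofReal (|t - u| * C)) (nhds t) (nhds 0) := by
    have hcont : Continuous fun u => ENNReal.ofReal (|t - u| * C) :=
      ENNReal.continuous_ofReal.comp (by fun_prop)
    simpa using hcont.tendsto t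
  filter_upwards [hlim.eventually_lt_const hε] with u hu using (hdist t u).trans_lt hu

lemma measure_map_restrict_compl_image {X Y : Type*} [MeasurableSpace X] [MeasurableSpace Y]
    (m : Measure X) {f : X → Y} (hf : Measurable f) {K : Set X} (hK : MeasurableSet K)
    (hfK : MeasurableSet (f '' K)) : (m.restrict K).map f (f '' K)ᶜ = 0 :=
  (ae_map_iff hf.aemeasurable hfK).2 <|
    (ae_restrict_mem hK).mono fun _ hx => Set.mem_image_of_mem f hx

lemma IsHaarNullBesov.mono {S T : Set (BesovSp d s r)} (hT : IsHaarNullBesov d s r τ T)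
    (hST : S ⊆ T) : IsHaarNullBesov d s r τ S := by
  obtain ⟨A, hTA, hA⟩ := hT
  exact ⟨A, hST.trans hTA, hA⟩

lemma isHaarNullBesov_of_countable_line (hτ : IsBesovTopology d s r τ) (hr : 0 < r)
    (hg : MemBesov d s r g) {B : Set (BSeq d)} (hB : MeasurableSet B)
    (hline : ∀ x : BSeq d, {t : ℝ | t • g - x ∈ B}.Countable) :
    IsHaarNullBesov d s r τ {c | c.1 ∈ B} := by
  let _ : MeasurableSpace (BesovSp d s r) := @borel _ τ
  have : BorelSpace (BesovSp d s r) := ⟨rfl⟩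
  have hval := hτ.continuous_val hr
  have : T2Space (BesovSp d s r) := .of_injective_continuous Subtype.val_injective hval
  have hγ := continuous_besovLine hτ hg hr
  have hK : IsCompact (besovLine hg hr '' Set.Icc 0 1) := isCompact_Icc.image hγ
  have : IsProbabilityMeasure (volume.restrict (Set.Icc (0 : ℝ) 1)) := ⟨by simp⟩
  refine ⟨{c | c.1 ∈ B}, subset_rfl, hval.measurable hB,
    (volume.restrict (Set.Icc (0 : ℝ) 1)).map (besovLine hg hr),
    Measure.isProbabilityMeasure_map hγ.measurable.aemeasurable, ⟨_, hK,
      measure_map_restrict_compl_image _ hγ.measurable measurableSet_Icc hK.measurableSet⟩,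
    fun x => ?_⟩
  have hsub : {y : BesovSp d s r | ∃ a ∈ {c : BesovSp d s r | c.1 ∈ B}, y.1 = x.1 + a.1} ⊆
      {y | y.1 - x.1 ∈ B} := by
    rintro y ⟨a, ha, hy⟩
    simpa [hy] using ha
  have hmeas : MeasurableSet {y : BesovSp d s r | y.1 - x.1 ∈ B} :=
    (hval.measurable.sub_const x.1) hB
  refine measure_mono_null hsub ?_
  rw [Measure.map_apply hγ.measurable hmeas]
  exact (hline x.1).measure_zero _

lemma subsingleton_smul_sub_mem {K E : Type*} [DivisionRing K] [AddCommGroup E] [Module K E]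
    {V : Submodule K E} {g : E} (hg : g ∉ V) (x : E) :
    {t : K | t • g - x ∈ V}.Subsingleton := by
  intro t ht u hu
  by_contra htu
  refine hg ((V.smul_mem_iff (sub_ne_zero.2 htu)).1 ?_)
  simpa [sub_smul] using V.sub_mem ht hu

lemma isHaarNullBesov_iUnion_submodule {ι : Type*} [Countable ι] (hτ : IsBesovTopology d s r τ)
    (hr : 0 < r) (hg : MemBesov d s r g) {V : ι → Submodule ℝ (BSeq d)}
    (hV : ∀ i, MeasurableSet (V i : Set (BSeq d))) (hgV : ∀ i, g ∉ V i) :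
    IsHaarNullBesov d s r τ {c | ∃ i, c.1 ∈ V i} := by
  have hline : ∀ x : BSeq d, {t : ℝ | t • g - x ∈ ⋃ i, (V i : Set (BSeq d))}.Countable := by
    intro x
    simp only [Set.mem_iUnion, SetLike.mem_coe, Set.ofPred_exists]
    exact Set.countable_iUnion fun i => (subsingleton_smul_sub_mem (hgV i) x).countable
  simpa only [Set.mem_iUnion, SetLike.mem_coe] using
    isHaarNullBesov_of_countable_line hτ hr hg (MeasurableSet.iUnion hV) hline

end HaarNull

/-! ### The weak scaling function -/

section WeakScalingFunction

variable {d : ℕ} {s r p a : ℝ} {c : BSeq d}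

/-- The weak scaling function `s̃_c(p)`; it is `0`, the supremum of the empty set, when no
`α ∈ (0,1)` is admissible. -/
noncomputable def weakScalingFunction (d : ℕ) (c : BSeq d) (p : ℝ) : ℝ :=
  sSup {α : ℝ | α ∈ Set.Ioo (0 : ℝ) 1 ∧ MemWBesov d ((1 - α) * p) p c}

lemma weakScalingFunction_eq_of_forall_lt_of_forall_gt (ha : 0 < a) (ha1 : a ≤ 1)
    (hlt : ∀ α, 0 < α → α < a → MemWBesov d ((1 - α) * p) p c)
    (hgt : ∀ α, a < α → ¬MemWBesov d ((1 - α) * p) p c) : weakScalingFunction d c p = a := by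
  have hsub : Set.Ioo 0 a ⊆ {α : ℝ | α ∈ Set.Ioo (0 : ℝ) 1 ∧ MemWBesov d ((1 - α) * p) p c} :=
    fun α hα => ⟨⟨hα.1, hα.2.trans_le ha1⟩, hlt α hα.1 hα.2⟩
  have hub : ∀ α ∈ {α : ℝ | α ∈ Set.Ioo (0 : ℝ) 1 ∧ MemWBesov d ((1 - α) * p) p c}, α ≤ a :=
    fun α hα => not_lt.1 fun h => hgt α h hα.2
  refine le_antisymm (csSup_le ((Set.nonempty_Ioo.2 ha).mono hsub) hub) ?_
  calc a = sSup (Set.Ioo 0 a) := (csSup_Ioo ha).symm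
    _ ≤ weakScalingFunction d c p := csSup_le_csSup ⟨a, hub⟩ (Set.nonempty_Ioo.2 ha) hsub

lemma weakScalingFunction_eq_alphaTilde (hd : 1 ≤ d) (hp : 0 < p) (hr : 0 < r) (hs : 0 < s)
    (hsob : (d : ℝ) / r - d / p < s) (hc : MemBesov d s r c)
    (hscale : ∀ q : ℚ, q < (1 - alphaTilde d s r p) * p → c ∉ scaleBounded d q p) :
    weakScalingFunction d c p = alphaTilde d s r p := by
  obtain ⟨hα0, hα1⟩ := alphaTilde_mem_Ioo hd hp hr hs hsob
  refine weakScalingFunction_eq_of_forall_lt_of_forall_gt hα0 hα1.le (fun α h0 hα => ?_)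
    fun α hα hmem => ?_
  · refine hc.memWBesov hr (mul_pos (by linarith) hp) <|
      growthExponent_neg_of_zero_lt (growthExponent_alphaTilde hd hp hr hs hsob)
        (growthExponent_self_neg hp hs hsob) ?_ (mul_lt_of_lt_one_left hp (by linarith))
    gcongr
  · obtain ⟨q, hαq, hq⟩ := exists_rat_btwn
      (show (1 - α) * p < (1 - alphaTilde d s r p) * p by gcongr)
    exact hscale q hq (scaleBounded_mono hαq.le hmem.mem_scaleBounded)

end WeakScalingFunction

theorem weakScalingFunction_generic_general {d : ℕ} (hd : 1 ≤ d) {p r s : ℝ} (hp : 0 < p)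
    (hr : 0 < r) (hs : 0 < s) (hsob : (d : ℝ) / r - d / p < s)
    {τ : TopologicalSpace (BesovSp d s r)} (hτ : IsBesovTopology d s r τ) :
    IsHaarNullBesov d s r τ
      {c : BesovSp d s r | weakScalingFunction d c.1 p ≠ alphaTilde d s r p} := by
  have hneg := growthExponent_self_neg hp hs hsob
  have hzero := growthExponent_alphaTilde hd hp hr hs hsob
  have hcrit : (1 - alphaTilde d s r p) * p < p :=
    mul_lt_of_lt_one_left hp (by linarith [(alphaTilde_mem_Ioo hd hp hr hs hsob).1])
  have hnull := isHaarNullBesov_iUnion_submodule hτ hr (memBesov_saturatingSeq hr)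
    (V := fun q : {q : ℚ // (q : ℝ) < (1 - alphaTilde d s r p) * p} => scaleBounded d q p)
    (fun q => measurableSet_scaleBounded d q p) fun q =>
      saturatingSeq_notMem_scaleBounded hr hneg (q.2.trans hcrit)
        (growthExponent_pos_of_lt_zero hzero hneg hcrit q.2)
  refine hnull.mono fun c hc => ?_
  by_contra hscale
  exact hc <| weakScalingFunction_eq_alphaTilde hd hp hr hs hsob c.2 fun q hq hmem =>
    hscale ⟨⟨q, hq⟩, hmem⟩

/-- Generic validity of the weak scaling function: for `1 ≤ p < ∞`, `1 ≤ r < ∞`, `s > d/r`,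
outside a Haar-null subset of `b^{s,∞}_r`, the weak scaling function
`s̃_c(p) = sup{α ∈ (0,1) : c ∈ W((1−α)p, p)}` equals `α̃`, where `α̃ = 2s/(2s+d)` if
`r > pd/(2s+d)` and `α̃ = 2(s−d/r+d/p)/(2(s−d/r)+d)` otherwise. -/
theorem weakScalingFunction_generic (d : ℕ) (hd : 1 ≤ d) (p r s : ℝ) (hp : 1 ≤ p) (hr : 1 ≤ r)
    (hs : (d : ℝ) / r < s)
    (τ : TopologicalSpace (BesovSp d s r)) (hτ : IsBesovTopology d s r τ) :
    IsHaarNullBesov d s r τ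
      {c : BesovSp d s r |
        sSup {α : ℝ | α ∈ Set.Ioo (0 : ℝ) 1 ∧ MemWBesov d ((1 - α) * p) p c.1}
          ≠ alphaTilde d s r p} :=
  weakScalingFunction_generic_general hd (by linarith) (by linarith)
    ((by positivity : (0 : ℝ) ≤ (d : ℝ) / r).trans_lt hs)
    ((sub_le_self _ (by positivity)).trans_lt hs) hτ
end

section
/- Let d ≥ 1, 1 ≤ p < ∞, 1 ≤ r < ∞ and s > d/r. Set α̃ = 2s/(2s+d) if r > pd/(2s+d), and α̃ = 2(s − d/r + d/p)/(2(s − d/r) + d) otherwise, and let g be the sequence with g_{j,k} = j^{−a} 2^{−(s−d/r+d/2)j} 2^{−(d/r)J} (a = 1 + 3/r, J the irreducibility index of (j,k)). Then for every ε with 0 < ε < 1 − α̃, the sequence g does NOT belong to W((1−α̃−ε)p, p); that is, sup_{λ>0} λ^{(1−α̃−ε)p} Σ_{j≥1} 2^{j(dp/2−d)} #{ k : g_{j,k} > λ } = ∞. In particular, the weak scaling function s̃_g(p) = sup{ α ∈ (0,1) : g ∈ W((1−α)p, p) } satisfies s̃_g(p) ≤ α̃. -/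
/-!
Testing the supremum that defines `‖c‖_{W(w,p)}` with a threshold adapted to one scale `j`, and
discarding all other scales, bounds it from below. If `2^{νj}` coefficients of scale `j` are at
least `j^{-a} 2^{-βj}`, the bound is a constant times `2^{(dp/2 - d + ν - βw)j} j^{-aw}`, so the
quasi-norm is infinite once `βw < dp/2 - d + ν`; the polynomial factor is harmless. For `g` there
are two such families:

* dense regime: all `2^{dj}` coefficients of scale `j`, with `β = s + d/2`, since `J ≤ j`;
* sparse regime: the single coefficient at `k = 0`, with `β = s - d/r + d/2`, since there
  `J = 0`.

For `w = (1 - α)p` they give the thresholds `2s/(2s+d)` and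
`2(s - d/r + d/p)/(2(s - d/r) + d)` for `α`, the two values of `α̃`.
-/

open MeasureTheory
open scoped ENNReal BigOperators

open Filter

lemma tendsto_rpow_mul_mul_rpow_atTop {b η : ℝ} (hb : 1 < b) (hη : 0 < η) (a : ℝ) :
    Tendsto (fun x : ℝ => b ^ (η * x) * x ^ a) atTop atTop := by
  refine (tendsto_exp_mul_div_rpow_atTop (-a) _ (mul_pos (Real.log_pos hb) hη)).congr' ?_
  filter_upwards [eventually_ge_atTop 0] with x hx
  rw [Real.rpow_def_of_pos (one_pos.trans hb), Real.rpow_neg hx, div_inv_eq_mul, mul_assoc]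

section WeakBesov

variable {d : ℕ} {w p a β ν : ℝ} {c : BSeq d}

-- The quasi-norm counts strict inequalities, so the threshold `t` is tested through `t / 2`.
lemma ofReal_le_wBesovNorm (w p : ℝ) (c : BSeq d) (j : ℕ) {t : ℝ} (ht : 0 < t) :
    ENNReal.ofReal ((t / 2) ^ w * ((2 : ℝ) ^ ((d * p / 2 - d) * j) *
      Nat.card {k : Fin d → Fin (2 ^ j) // t ≤ |c j k|})) ≤ wBesovNorm d w p c := by
  have hcard : Nat.card {k : Fin d → Fin (2 ^ j) // t ≤ |c j k|} ≤
      Nat.card {k : Fin d → Fin (2 ^ j) // t / 2 < |c j k|} :=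
    Nat.card_mono (Set.toFinite _) fun k (hk : t ≤ |c j k|) => (half_lt_self ht).trans_le hk
  rw [ENNReal.ofReal_mul (by positivity), ENNReal.ofReal_mul (by positivity),
    ENNReal.ofReal_natCast]
  refine le_trans ?_ (le_iSup _ (⟨t / 2, half_pos ht⟩ : Set.Ioi (0 : ℝ)))
  gcongr
  refine le_trans ?_ (ENNReal.le_tsum j)
  gcongr

theorem wBesovNorm_eq_top_of_le_card
    (hcard : ∀ᶠ j : ℕ in atTop, (2 : ℝ) ^ (ν * j) ≤
      Nat.card {k : Fin d → Fin (2 ^ j) // (j : ℝ) ^ (-a) * (2 : ℝ) ^ (-β * j) ≤ |c j k|})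
    (hw : β * w < d * p / 2 - d + ν) : wBesovNorm d w p c = ⊤ := by
  set η : ℝ := d * p / 2 - d + ν - β * w with hη
  have hlim : Tendsto (fun j : ℕ => (2 : ℝ)⁻¹ ^ w * ((2 : ℝ) ^ (η * j) * (j : ℝ) ^ (-a * w)))
      atTop atTop :=
    ((tendsto_rpow_mul_mul_rpow_atTop one_lt_two (sub_pos.mpr hw) _).comp
      tendsto_natCast_atTop_atTop).const_mul_atTop (by positivity)
  refine top_unique (le_of_tendsto (ENNReal.tendsto_ofReal_atTop.comp hlim) ?_)
  filter_upwards [hcard, eventually_gt_atTop 0] with j hj hj0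
  have ht : 0 < (j : ℝ) ^ (-a) * (2 : ℝ) ^ (-β * j) := by positivity
  refine le_trans (ENNReal.ofReal_le_ofReal ?_) (ofReal_le_wBesovNorm w p c j ht)
  calc (2 : ℝ)⁻¹ ^ w * ((2 : ℝ) ^ (η * j) * (j : ℝ) ^ (-a * w))
      = ((j : ℝ) ^ (-a) * (2 : ℝ) ^ (-β * j) / 2) ^ w *
          ((2 : ℝ) ^ ((d * p / 2 - d) * j) * (2 : ℝ) ^ (ν * j)) := by
        have hexp : η * j = -β * j * w + ((d * p / 2 - d) * j + ν * j) := by rw [hη]; ring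
        rw [div_eq_mul_inv, Real.mul_rpow ht.le (by positivity),
          Real.mul_rpow (by positivity) (by positivity), ← Real.rpow_mul (by positivity),
          ← Real.rpow_mul zero_le_two, hexp, Real.rpow_add two_pos, Real.rpow_add two_pos]
        ring
    _ ≤ ((j : ℝ) ^ (-a) * (2 : ℝ) ^ (-β * j) / 2) ^ w * ((2 : ℝ) ^ ((d * p / 2 - d) * j) *
          Nat.card {k : Fin d → Fin (2 ^ j) //
            (j : ℝ) ^ (-a) * (2 : ℝ) ^ (-β * j) ≤ |c j k|}) := by
        gcongr

theorem wBesovNorm_eq_top_of_forall_le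
    (hc : ∀ᶠ j : ℕ in atTop, ∀ k, (j : ℝ) ^ (-a) * (2 : ℝ) ^ (-β * j) ≤ |c j k|)
    (hw : β * w < d * p / 2) : wBesovNorm d w p c = ⊤ := by
  refine wBesovNorm_eq_top_of_le_card (a := a) (β := β) (ν := d)
    (hc.mono fun j hj => ?_) (by linarith)
  rw [Nat.card_congr (Equiv.subtypeUnivEquiv hj), Nat.card_fun, Nat.card_fin, Nat.card_fin,
    ← pow_mul, mul_comm j]
  exact_mod_cast le_rfl

theorem wBesovNorm_eq_top_of_exists_le
    (hc : ∀ᶠ j : ℕ in atTop, ∃ k, (j : ℝ) ^ (-a) * (2 : ℝ) ^ (-β * j) ≤ |c j k|)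
    (hw : β * w < d * p / 2 - d) : wBesovNorm d w p c = ⊤ := by
  refine wBesovNorm_eq_top_of_le_card (a := a) (β := β) (ν := 0)
    (hc.mono fun j ⟨k, hk⟩ => ?_) (by linarith)
  rw [zero_mul, Real.rpow_zero, Nat.one_le_cast]
  exact Nat.card_pos_iff.mpr ⟨⟨k, hk⟩, inferInstance⟩

end WeakBesov

lemma irredIndex_le (d j : ℕ) (k : Fin d → Fin (2 ^ j)) : irredIndex d j k ≤ j :=
  Nat.find_min' _ fun _ => by simp

lemma irredIndex_zero (d j : ℕ) : irredIndex d j 0 = 0 :=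
  Nat.le_zero.mp (Nat.find_min' _ fun _ => by simp)

section SaturatingSequence

variable {d : ℕ} {s r p α : ℝ}

lemma le_gSeq (d : ℕ) (s : ℝ) (hr : 0 < r) {j : ℕ} (hj : j ≠ 0) (k : Fin d → Fin (2 ^ j)) :
    (j : ℝ) ^ (-(1 + 3 / r)) * (2 : ℝ) ^ (-(s + d / 2) * j) ≤ gSeq d s r j k := by
  have hJ : (d : ℝ) / r * irredIndex d j k ≤ d / r * j := by
    gcongr
    exact irredIndex_le d j k
  rw [gSeq, if_neg hj, mul_assoc, ← Real.rpow_add two_pos]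
  gcongr
  · exact one_le_two
  · linarith

lemma gSeq_zero (d : ℕ) (s r : ℝ) {j : ℕ} (hj : j ≠ 0) :
    gSeq d s r j 0 = (j : ℝ) ^ (-(1 + 3 / r)) * (2 : ℝ) ^ (-(s - d / r + d / 2) * j) := by
  rw [gSeq, if_neg hj, irredIndex_zero, Nat.cast_zero, mul_zero, Real.rpow_zero, mul_one]

theorem wBesovNorm_gSeq_eq_top_of_dense_lt (hp : 0 < p) (hr : 0 < r) (hs : 0 < 2 * s + d)
    (hα : 2 * s / (2 * s + d) < α) : wBesovNorm d ((1 - α) * p) p (gSeq d s r) = ⊤ := by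
  refine wBesovNorm_eq_top_of_forall_le (a := 1 + 3 / r) (β := s + d / 2) ?_ ?_
  · filter_upwards [eventually_ne_atTop 0] with j hj k
    exact (le_gSeq d s hr hj k).trans (le_abs_self _)
  · have hα' : (s + d / 2) * (1 - α) < d / 2 := by
      rw [div_lt_iff₀ hs] at hα
      linarith
    linarith [mul_lt_mul_of_pos_right hα' hp]

theorem wBesovNorm_gSeq_eq_top_of_sparse_lt (hp : 0 < p) (hs : 0 < 2 * (s - d / r) + d)
    (hα : 2 * (s - d / r + d / p) / (2 * (s - d / r) + d) < α) :
    wBesovNorm d ((1 - α) * p) p (gSeq d s r) = ⊤ := by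
  refine wBesovNorm_eq_top_of_exists_le (a := 1 + 3 / r) (β := s - d / r + d / 2) ?_ ?_
  · filter_upwards [eventually_ne_atTop 0] with j hj
    exact ⟨0, (gSeq_zero d s r hj).ge.trans (le_abs_self _)⟩
  · have hα' : (s - d / r + d / 2) * (1 - α) < d / 2 - d / p := by
      rw [div_lt_iff₀ hs] at hα
      linarith
    calc (s - d / r + d / 2) * ((1 - α) * p) = (s - d / r + d / 2) * (1 - α) * p := by ring
      _ < (d / 2 - d / p) * p := by gcongr
      _ = d * p / 2 - d := by field_simp

theorem gSeq_not_memWBesov_general (hp : 0 < p) (hr : 0 < r) (hs : d / r < s + d / 2)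
    (hα : alphaTilde d s r p < α) : wBesovNorm d ((1 - α) * p) p (gSeq d s r) = ⊤ := by
  have hdr : 0 ≤ (d : ℝ) / r := by positivity
  rw [alphaTilde] at hα
  split_ifs at hα
  · exact wBesovNorm_gSeq_eq_top_of_dense_lt hp hr (by linarith) hα
  · exact wBesovNorm_gSeq_eq_top_of_sparse_lt hp (by linarith) hα

lemma alphaTilde_nonneg (hp : 0 < p) (hr : 0 < r) (hs : d / r ≤ s) :
    0 ≤ alphaTilde d s r p := by
  have hs0 : 0 ≤ s := le_trans (by positivity) hs
  have : 0 ≤ s - d / r := sub_nonneg.mpr hs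
  rw [alphaTilde]
  split_ifs <;> positivity

end SaturatingSequence

/-- The sequence `g` does not belong to `W((1−α̃−ε)p, p)` for any `0 < ε < 1 − α̃`; in
particular its weak scaling function satisfies `s̃_g(p) ≤ α̃`. -/
theorem gSeq_not_memWBesov (d : ℕ) (hd : 1 ≤ d) (p r s : ℝ)
    (hp : 1 ≤ p) (hr : 1 ≤ r) (hs : (d : ℝ) / r < s) :
    (∀ ε : ℝ, 0 < ε → ε < 1 - alphaTilde d s r p →
      wBesovNorm d ((1 - alphaTilde d s r p - ε) * p) p (gSeq d s r) = ⊤) ∧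
    sSup {α : ℝ | α ∈ Set.Ioo (0 : ℝ) 1 ∧ MemWBesov d ((1 - α) * p) p (gSeq d s r)}
      ≤ alphaTilde d s r p := by
  have hp0 : 0 < p := one_pos.trans_le hp
  have hr0 : 0 < r := one_pos.trans_le hr
  have hs' : d / r < s + d / 2 := hs.trans_le (le_add_of_nonneg_right (by positivity))
  have htop {α : ℝ} (hα : alphaTilde d s r p < α) :
      wBesovNorm d ((1 - α) * p) p (gSeq d s r) = ⊤ :=
    gSeq_not_memWBesov_general hp0 hr0 hs' hα
  -- `0 ≤ α̃` is what makes the second bound true when the set is empty, as then `sSup ∅ = 0`.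
  refine ⟨fun ε hε _ => ?_, Real.sSup_le (fun α hα => ?_) (alphaTilde_nonneg hp0 hr0 hs.le)⟩
  · rw [sub_sub]
    exact htop (lt_add_of_pos_right _ hε)
  · exact not_lt.mp fun hlt => hα.2 (htop hlt)
end
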